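/- Let 0 ≤ β < 4, let τ > 0 and σ > 0 be constants, and let 0 < α < 32π²(1 − β/4). Then there exists a constant C > 0 (depending only on α, β, τ, σ) such that for every smooth function u : ℝ⁴ → ℝ satisfying ∫_{ℝ⁴}(|Δu|² + τ|∇u|² + σ u²) dx ≤ 1, one has ∫_{ℝ⁴} (e^{α u²} − 1)/|x|^β dx ≤ C. -/

import Mathlib

/-! The proof works on the Fourier side and avoids rearrangement.

Let `h` be the Fourier transform of `u` and `w(ξ) = |2πξ|⁴ + σ`. By Plancherel the energy bound gives
`∫ w |h|² ≤ 1` (`energy_fourier`). This needs the pointwise Laplacian of `u` to be its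
distributional one (`laplacian_distribution`); only there does the gradient term in the energy enter,
to justify the integrations by parts.

Split the frequencies at `|ξ| = ρ`. By Cauchy–Schwarz the low-frequency part of `u` is bounded
pointwise by `(∫_{|ξ|<ρ} w⁻¹)^{1/2} = (log (w(ρ)/σ) / (32π²))^{1/2}`, and the high-frequency part has
squared `L²` norm at most `1 / w(ρ)` (`low_freq`, `high_freq`). If `ρ` is chosen with
`w(ρ) = σ exp (32π²t²)`, the low part is at most `t`, and Chebyshev's inequality for the high part
gives `|{|u| > t + 1}| ≤ σ⁻¹ exp (-32π²t²)` (`tail_bound`). Since the shift by `1` is of lower order,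
this Gaussian tail bounds `∫ (exp (a u²) - 1)` uniformly for every `a < 32π²` (`exp_moment`).

The singular weight is absorbed by Young's inequality (`weight_pointwise`): with conjugate exponents
`p, q` such that `α p < 32π²` and `β q < 4`, the integrand is at most `exp (α p u²) - 1` plus a
function supported in the unit ball whose integral is finite and independent of `u`. Such `p, q` exist
exactly because `α < 32π² (1 - β/4)`. -/

open MeasureTheory Real Filter Topology ENNReal

noncomputable section

/-- Four-dimensional Euclidean space with Lebesgue measure. -/
abbrev R4 : Type := EuclideanSpace ℝ (Fin 4)

/-- The Laplacian of `u : ℝ⁴ → ℝ`, as the sum of the pure second derivatives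
along the coordinate directions. -/
noncomputable def lapl (u : R4 → ℝ) (x : R4) : ℝ :=
  ∑ i : Fin 4, iteratedFDeriv ℝ 2 u x ![EuclideanSpace.single i 1, EuclideanSpace.single i 1]

/-! ### The distributional Laplacian of a smooth function of finite energy -/

section WeakLaplacian
open SchwartzMap Laplacian LineDeriv
open scoped ContDiff

/-- The `i`-th standard coordinate vector of `ℝ⁴`. -/
abbrev e4 (i : Fin 4) : R4 := EuclideanSpace.single i 1

/-- The `i`-th partial derivative of `u`. -/
abbrev pd (i : Fin 4) (u : R4 → ℝ) (x : R4) : ℝ := fderiv ℝ u x (e4 i)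

lemma contDiff_pd {u : R4 → ℝ} (hu : ContDiff ℝ ∞ u) (i : Fin 4) : ContDiff ℝ ∞ (pd i u) := by
  exact (hu.fderiv_right (m := ∞) (by simp)).clm_apply contDiff_const

lemma lapl_eq {u : R4 → ℝ} (hu : ContDiff ℝ ∞ u) (x : R4) :
    lapl u x = ∑ i, pd i (pd i u) x := by
  unfold lapl
  congr 1; ext i
  have hd : DifferentiableAt ℝ (fderiv ℝ u) x :=
    (hu.fderiv_right (m := ∞) (by simp)).differentiable (by simp) x
  rw [iteratedFDeriv_two_apply]
  simp only [pd, Matrix.cons_val_zero, Matrix.cons_val_one]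
  rw [fderiv_clm_apply hd (differentiableAt_const _)]
  simp

lemma continuous_lapl {u : R4 → ℝ} (hu : ContDiff ℝ ∞ u) : Continuous (lapl u) := by
  have : lapl u = fun x => ∑ i, pd i (pd i u) x := funext (lapl_eq hu)
  rw [this]
  exact continuous_finsetSum _ fun i _ => (contDiff_pd (contDiff_pd hu i) i).continuous

lemma abs_pd_le (u : R4 → ℝ) (x : R4) (i : Fin 4) : |pd i u x| ≤ ‖gradient u x‖ := by
  have h := (fderiv ℝ u x).le_opNorm (e4 i)
  rw [gradient, LinearIsometryEquiv.norm_map]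
  simpa using h

lemma integrable_schwartz_mul {f : R4 → ℝ} (hf : MemLp f 2) (φ : 𝓢(R4, ℝ)) :
    Integrable fun x => φ x * f x :=
  (φ.memLp 2).integrable_mul hf

/-- Green's formula against a compactly supported test function. -/
lemma integral_cutoff_lapl {u : R4 → ℝ} (hu : ContDiff ℝ ∞ u) {g : R4 → ℝ} (hg : ContDiff ℝ ∞ g)
    (hgc : HasCompactSupport g) :
    ∫ x, g x * lapl u x = - ∫ x, ∑ i, pd i g x * pd i u x := by
  have hc (f : R4 → ℝ) (hf : Continuous f) : Integrable (fun x => g x * f x) :=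
    (hg.continuous.mul hf).integrable_of_hasCompactSupport hgc.mul_right
  have hc' (i) (f : R4 → ℝ) (hf : Continuous f) : Integrable (fun x => pd i g x * f x) :=
    ((contDiff_pd hg i).continuous.mul hf).integrable_of_hasCompactSupport
      (hgc.fderiv_apply ℝ (e4 i)).mul_right
  simp_rw [lapl_eq hu, Finset.mul_sum]
  rw [integral_finsetSum, integral_finsetSum, ← Finset.sum_neg_distrib]
  · congr 1; ext i
    exact integral_mul_fderiv_eq_neg_fderiv_mul_of_integrable
      (hc' i _ (contDiff_pd hu i).continuous) (hc _ (contDiff_pd (contDiff_pd hu i) i).continuous)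
      (hc _ (contDiff_pd hu i).continuous) (fun x _ => hg.differentiable (by simp) x)
      (fun x _ => (contDiff_pd hu i).differentiable (by simp) x)
  · exact fun i _ => hc' i _ (contDiff_pd hu i).continuous
  · exact fun i _ => hc _ (contDiff_pd (contDiff_pd hu i) i).continuous

/-- Dilated bump functions: cut-offs with uniformly bounded gradient that are eventually equal to
`1` near each point. -/
lemma exists_cutoff : ∃ χ : ℕ → R4 → ℝ, ∃ C : ℝ, (∀ n, ContDiff ℝ ∞ (χ n)) ∧
    (∀ n, HasCompactSupport (χ n)) ∧ (∀ n x, |χ n x| ≤ 1) ∧ (∀ n i x, |pd i (χ n) x| ≤ C) ∧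
    (∀ x, ∀ᶠ n in atTop, χ n x = 1) ∧ (∀ x i, ∀ᶠ n in atTop, pd i (χ n) x = 0) := by
  let b : ContDiffBump (0 : R4) := ⟨1, 2, by norm_num, by norm_num⟩
  have hb : ContDiff ℝ ∞ b := b.contDiff
  obtain ⟨C, hC⟩ := (b.hasCompactSupport.fderiv ℝ).exists_bound_of_continuous
    (hb.continuous_fderiv (by simp))
  let c : ℕ → ℝ := fun n => ((n : ℝ) + 1)⁻¹
  have hc0 (n) : 0 < c n := by positivity
  have hc1 (n) : c n ≤ 1 := inv_le_one_of_one_le₀ (by simp)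
  have hsm (n) : ContDiff ℝ ∞ (fun x : R4 => b (c n • x)) := by fun_prop
  have hone (x : R4) : ∀ᶠ n in atTop, ‖c n • x‖ < 1 := by
    have : Tendsto (fun n : ℕ => ‖c n • x‖) atTop (𝓝 ‖(0 : ℝ) • x‖) :=
      ((tendsto_one_div_add_atTop_nhds_zero_nat.congr (by simp [c])).smul_const x).norm
    exact this.eventually (gt_mem_nhds (by simp))
  have hev (x : R4) : ∀ᶠ n in atTop, (fun y : R4 => b (c n • y)) =ᶠ[𝓝 x] fun _ => 1 := by
    filter_upwards [hone x] with n hn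
    have : ∀ᶠ y : R4 in 𝓝 x, ‖c n • y‖ < 1 :=
      ((continuous_const_smul (c n)).norm.tendsto x).eventually (gt_mem_nhds hn)
    filter_upwards [this] with y hy
    exact b.one_of_mem_closedBall (by simpa [b] using hy.le)
  refine ⟨fun n x => b (c n • x), C, hsm, ?_, ?_, ?_, ?_, ?_⟩
  · intro n
    exact b.hasCompactSupport.comp_smul (hc0 n).ne'
  · intro n x
    rw [abs_of_nonneg b.nonneg]; exact b.le_one
  · intro n i x
    have : fderiv ℝ (fun x : R4 => b (c n • x)) x = c n • fderiv ℝ b (c n • x) := by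
      simpa using fderiv_comp_smul (c n) (f := (b : R4 → ℝ)) (x := x)
    simp only [pd, this]
    rw [smul_apply, smul_eq_mul, abs_mul, abs_of_pos (hc0 n)]
    calc _ ≤ 1 * ‖fderiv ℝ b (c n • x) (e4 i)‖ := by
          gcongr
          · exact hc1 n
          · rfl
      _ ≤ C := by
          rw [one_mul]
          refine (ContinuousLinearMap.le_opNorm _ _).trans ?_
          simpa using hC (c n • x)
  · intro x
    filter_upwards [hev x] with n hn using hn.self_of_nhds
  · intro x i
    filter_upwards [hev x] with n hn
    simp only [pd]
    rw [hn.fderiv_eq]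
    simp

/-- Green's formula against a Schwartz function. The second derivatives of `u` are not known to be
square integrable one by one (only their sum `lapl u` is), so the test function is cut off and
the cut-off is removed by dominated convergence. -/
lemma integral_schwartz_lapl {u : R4 → ℝ} (hu : ContDiff ℝ ∞ u)
    (h1 : ∀ i, MemLp (pd i u) 2) (h2 : MemLp (lapl u) 2) (φ : 𝓢(R4, ℝ)) :
    ∫ x, φ x * lapl u x = - ∫ x, ∑ i, pd i φ x * pd i u x := by
  obtain ⟨χ, C, hsm, hcs, hle, hdle, hone, hzero⟩ := exists_cutoff
  have hφ : ContDiff ℝ ∞ φ := φ.smooth ⊤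
  have hprod (n i x) : pd i (fun y => χ n y * φ y) x = χ n x * pd i φ x + pd i (χ n) x * φ x := by
    simp only [pd]
    rw [fderiv_fun_mul ((hsm n).differentiable (by simp) x) (hφ.differentiable (by simp) x)]
    simp [mul_comm]
  have hC : 0 ≤ C := (abs_nonneg _).trans (hdle 0 0 0)
  have hn (n : ℕ) := integral_cutoff_lapl hu ((hsm n).mul hφ) ((hcs n).mul_right (f' := φ))
  have hL : Tendsto (fun n => ∫ x, (χ n x * φ x) * lapl u x) atTop
      (𝓝 (∫ x, φ x * lapl u x)) := by
    apply tendsto_integral_of_dominated_convergence (fun x => ‖φ x * lapl u x‖)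
    · intro n
      exact (((hsm n).continuous.mul φ.continuous).mul (continuous_lapl hu)).aestronglyMeasurable
    · exact (integrable_schwartz_mul h2 φ).norm
    · intro n
      filter_upwards with x
      rw [mul_assoc, norm_mul]
      exact mul_le_of_le_one_left (norm_nonneg _) (hle n x)
    · filter_upwards with x
      apply tendsto_const_nhds.congr'
      filter_upwards [hone x] with n hn
      rw [hn, one_mul]
  have hR : Tendsto (fun n => ∫ x, ∑ i, pd i (fun y => χ n y * φ y) x * pd i u x) atTop
      (𝓝 (∫ x, ∑ i, pd i φ x * pd i u x)) := by
    apply tendsto_integral_of_dominated_convergence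
      (fun x => ∑ i, (‖pd i φ x * pd i u x‖ + C * ‖φ x * pd i u x‖))
    · intro n
      exact (continuous_finsetSum _ fun i _ => (contDiff_pd ((hsm n).mul hφ) i).continuous.mul
        (contDiff_pd hu i).continuous).aestronglyMeasurable
    · refine integrable_finsetSum _ fun i _ => ?_
      exact (integrable_schwartz_mul (h1 i) (∂_{e4 i} φ : 𝓢(R4, ℝ))).norm.add
        ((integrable_schwartz_mul (h1 i) φ).norm.const_mul C)
    · intro n
      filter_upwards with x
      refine (norm_sum_le _ _).trans (Finset.sum_le_sum fun i _ => ?_)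
      rw [hprod, add_mul]
      refine (norm_add_le _ _).trans (add_le_add ?_ ?_)
      · rw [mul_assoc, norm_mul]
        exact mul_le_of_le_one_left (norm_nonneg _) (hle n x)
      · rw [mul_assoc, norm_mul]
        gcongr
        exact hdle n i x
    · filter_upwards with x
      apply tendsto_const_nhds.congr'
      have := (eventually_all (l := atTop)).2 (hzero x)
      filter_upwards [hone x, this] with n hn hn'
      refine Finset.sum_congr rfl fun i _ => ?_
      rw [hprod, hn, hn' i]
      ring
  have hL' : Tendsto (fun n => ∫ x, (χ n x * φ x) * lapl u x) atTop
      (𝓝 (- ∫ x, ∑ i, pd i φ x * pd i u x)) := hR.neg.congr fun n => (hn n).symm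
  exact tendsto_nhds_unique hL hL'

lemma integral_schwartz_grad {u : R4 → ℝ} (hu : ContDiff ℝ ∞ u)
    (h0 : MemLp u 2) (h1 : ∀ i, MemLp (pd i u) 2) (φ : 𝓢(R4, ℝ)) :
    ∫ x, Δ φ x * u x = - ∫ x, ∑ i, pd i φ x * pd i u x := by
  have hΔ (x) : Δ φ x = ∑ i, (∂_{e4 i} (∂_{e4 i} φ) : 𝓢(R4, ℝ)) x := by
    rw [SchwartzMap.laplacian_eq_sum (EuclideanSpace.basisFun (Fin 4) ℝ)]
    simp
  simp_rw [hΔ, Finset.sum_mul]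
  rw [integral_finsetSum, integral_finsetSum, ← Finset.sum_neg_distrib]
  · congr 1; ext i
    have := integral_mul_fderiv_eq_neg_fderiv_mul_of_integrable
      (f := u) (g := (∂_{e4 i} φ : 𝓢(R4, ℝ))) (v := e4 i) (μ := volume)
      ((integrable_schwartz_mul (h1 i) (∂_{e4 i} φ : 𝓢(R4, ℝ))).congr
        (.of_forall fun x => mul_comm _ _))
      ((integrable_schwartz_mul h0 (∂_{e4 i} (∂_{e4 i} φ) : 𝓢(R4, ℝ))).congr
        (.of_forall fun x => mul_comm _ _))
      ((integrable_schwartz_mul h0 (∂_{e4 i} φ : 𝓢(R4, ℝ))).congr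
        (.of_forall fun x => mul_comm _ _))
      (fun x _ => hu.differentiable (by simp) x)
      (fun x _ => (∂_{e4 i} φ : 𝓢(R4, ℝ)).differentiable x)
    simp_rw [mul_comm (u _), mul_comm (fderiv ℝ u _ _)] at this
    exact this
  · exact fun i _ => integrable_schwartz_mul (h1 i) (∂_{e4 i} φ : 𝓢(R4, ℝ))
  · exact fun i _ => integrable_schwartz_mul h0 (∂_{e4 i} (∂_{e4 i} φ) : 𝓢(R4, ℝ))

lemma integral_laplacian_real {u : R4 → ℝ} (hu : ContDiff ℝ ∞ u) (h0 : MemLp u 2)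
    (h1 : ∀ i, MemLp (pd i u) 2) (h2 : MemLp (lapl u) 2) (φ : 𝓢(R4, ℝ)) :
    ∫ x, φ x * lapl u x = ∫ x, Δ φ x * u x := by
  rw [integral_schwartz_lapl hu h1 h2, integral_schwartz_grad hu h0 h1]

/-- The pointwise Laplacian of `u` is also its Laplacian as a tempered distribution. -/
lemma laplacian_distribution {u : R4 → ℝ} (hu : ContDiff ℝ ∞ u) (h0 : MemLp u 2)
    (h1 : ∀ i, MemLp (pd i u) 2) (h2 : MemLp (lapl u) 2) :
    ((h2.ofReal (K := ℂ)).toLp _ : 𝓢'(R4, ℂ)) = Δ ((h0.ofReal (K := ℂ)).toLp _ : 𝓢'(R4, ℂ)) := by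
  ext φ
  rw [TemperedDistribution.laplacian_apply_apply, Lp.toTemperedDistribution_apply,
    Lp.toTemperedDistribution_apply]
  have e1 : ∫ x, φ x • ((h2.ofReal (K := ℂ)).toLp _ : R4 → ℂ) x = ∫ x, φ x * (lapl u x : ℂ) := by
    apply integral_congr_ae
    filter_upwards [(h2.ofReal (K := ℂ)).coeFn_toLp] with x hx
    rw [hx]; rfl
  have e2 : ∫ x, (Δ φ) x • ((h0.ofReal (K := ℂ)).toLp _ : R4 → ℂ) x
      = ∫ x, (Δ φ) x * (u x : ℂ) := by
    apply integral_congr_ae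
    filter_upwards [(h0.ofReal (K := ℂ)).coeFn_toLp] with x hx
    rw [hx]; rfl
  rw [e1, e2]
  have i1 : Integrable fun x => φ x * (lapl u x : ℂ) :=
    (φ.memLp 2).integrable_mul (h2.ofReal (K := ℂ))
  have i2 : Integrable fun x => (Δ φ) x * (u x : ℂ) :=
    ((Δ φ).memLp 2).integrable_mul (h0.ofReal (K := ℂ))
  -- A real-linear functional `ℓ` on `ℂ` (the real or imaginary part) reduces to real test functions.
  have key (ℓ : ℂ →L[ℝ] ℝ) (hℓ : ∀ (z : ℂ) (r : ℝ), ℓ (z * r) = ℓ z * r) :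
      ℓ (∫ x, φ x * (lapl u x : ℂ)) = ℓ (∫ x, (Δ φ) x * (u x : ℂ)) := by
    rw [← ℓ.integral_comp_comm i1, ← ℓ.integral_comp_comm i2]
    simp_rw [hℓ]
    have := integral_laplacian_real hu h0 h1 h2 (SchwartzMap.postcompCLM ℓ φ)
    have hΔ (x) : Δ (SchwartzMap.postcompCLM ℓ φ) x = ℓ ((Δ φ) x) := by
      rw [SchwartzMap.laplacian_apply, SchwartzMap.laplacian_apply]
      exact (φ.smooth 2).contDiffAt.laplacian_CLM_comp_left (l := ℓ)
    simp_rw [hΔ] at this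
    exact this
  apply Complex.ext
  · exact key Complex.reCLM (by simp)
  · exact key Complex.imCLM (by simp)

end WeakLaplacian

/-! ### The `L²` Fourier transform -/

section FourierSide
open FourierTransform SchwartzMap Laplacian
open scoped ContDiff

/-- If `L = ΔU` as tempered distributions and both are square integrable, then the `L²` Fourier
transforms satisfy `𝓕L = -|2πξ|² 𝓕U` almost everywhere. -/
lemma fourier_laplacian_ae (U L : Lp ℂ 2 (volume : Measure R4))
    (h : (L : 𝓢'(R4, ℂ)) = Δ (U : 𝓢'(R4, ℂ))) :
    ∀ᵐ x : R4, (𝓕 L : Lp ℂ 2 (volume : Measure R4)) x =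
      -((2 * π) ^ 2 * ‖x‖ ^ 2 : ℝ) * (𝓕 U : Lp ℂ 2 (volume : Measure R4)) x := by
  have hF (φ : 𝓢(R4, ℂ)) : ((𝓕 L : Lp ℂ 2 (volume : Measure R4)) : 𝓢'(R4, ℂ)) φ =
      -(2 * π) ^ 2 • TemperedDistribution.smulLeftCLM ℂ (fun x : R4 ↦ Complex.ofReal (‖x‖ ^ 2))
        ((𝓕 U : Lp ℂ 2 (volume : Measure R4)) : 𝓢'(R4, ℂ)) φ := by
    rw [← Lp.fourier_toTemperedDistribution_eq, ← Lp.fourier_toTemperedDistribution_eq, h,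
      TemperedDistribution.laplacian_eq_fourierMultiplierCLM,
      TemperedDistribution.fourierMultiplierCLM_apply, TemperedDistribution.fourier_apply]
    change -(2 * π) ^ 2 • (𝓕⁻ (TemperedDistribution.smulLeftCLM ℂ (fun x : R4 ↦ Complex.ofReal (‖x‖ ^ 2))
        (𝓕 (U : 𝓢'(R4, ℂ))))) (𝓕 φ) = _
    rw [TemperedDistribution.fourierInv_apply, fourierInv_fourier_eq]
  have hloc : LocallyIntegrable
      (fun x : R4 ↦ (𝓕 U : Lp ℂ 2 (volume : Measure R4)) x) volume :=
    (Lp.memLp _).locallyIntegrable (by norm_num)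
  have hcont : Continuous fun x : R4 ↦ -(((2 * π) ^ 2 * ‖x‖ ^ 2 : ℝ) : ℂ) := by fun_prop
  apply ae_eq_of_integral_contDiff_smul_eq
  · exact (Lp.memLp _).locallyIntegrable (by norm_num)
  · rw [← locallyIntegrableOn_univ] at hloc ⊢
    exact hloc.continuousOn_mul hcont.continuousOn isOpen_univ.isLocallyClosed
  · intro g g_smooth g_cpt
    have hg₁ : HasCompactSupport (Complex.ofRealCLM ∘ g) := g_cpt.comp_left rfl
    have hg₂ : ContDiff ℝ ∞ (Complex.ofRealCLM ∘ g) := by fun_prop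
    have := hF (hg₁.toSchwartzMap hg₂)
    have htg : Function.HasTemperateGrowth (fun x : R4 ↦ Complex.ofReal (‖x‖ ^ 2)) := by fun_prop
    rw [TemperedDistribution.smulLeftCLM_apply_apply, Lp.toTemperedDistribution_apply,
      Lp.toTemperedDistribution_apply, ← integral_smul] at this
    have hlhs : ∫ x : R4, g x • (𝓕 L : Lp ℂ 2 (volume : Measure R4)) x =
        ∫ x : R4, (hg₁.toSchwartzMap hg₂) x • (𝓕 L : Lp ℂ 2 (volume : Measure R4)) x := by
      simp
    rw [hlhs, this]
    apply integral_congr_ae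
    filter_upwards with x
    rw [SchwartzMap.smulLeftCLM_apply_apply htg]
    simp
    ring

/-- The `L²` inverse Fourier transform of an integrable `h` agrees almost everywhere with the
inverse Fourier integral, hence is bounded by the `L¹` norm of `h`. -/
lemma norm_fourierInv_le (h : Lp ℂ 2 (volume : Measure R4))
    (hi : Integrable (h : R4 → ℂ)) :
    ∀ᵐ x : R4, ‖(𝓕⁻ h : Lp ℂ 2 (volume : Measure R4)) x‖ ≤ ∫ y : R4, ‖h y‖ := by
  have hc : Continuous (𝓕⁻ (h : R4 → ℂ)) :=
    VectorFourier.fourierIntegral_continuous (L := -innerₗ R4) Real.continuous_fourierChar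
      (continuous_inner.neg) hi
  have key : ∀ᵐ x : R4, (𝓕⁻ h : Lp ℂ 2 (volume : Measure R4)) x = 𝓕⁻ (h : R4 → ℂ) x := by
    apply ae_eq_of_integral_contDiff_smul_eq
    · exact (Lp.memLp _).locallyIntegrable (by norm_num)
    · exact hc.locallyIntegrable
    · intro g g_smooth g_cpt
      have hg₁ : HasCompactSupport (Complex.ofRealCLM ∘ g) := g_cpt.comp_left rfl
      have hg₂ : ContDiff ℝ ∞ (Complex.ofRealCLM ∘ g) := by fun_prop
      set φ := hg₁.toSchwartzMap hg₂ with hφ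
      have h1 := congrArg (fun T : 𝓢'(R4, ℂ) => T φ) (Lp.fourierInv_toTemperedDistribution_eq h)
      simp only [TemperedDistribution.fourierInv_apply, Lp.toTemperedDistribution_apply, smul_eq_mul] at h1
      have h2 := VectorFourier.integral_fourierIntegral_smul_eq_flip (L := -innerₗ R4)
        (μ := (volume : Measure R4)) (ν := (volume : Measure R4))
        (f := (φ : R4 → ℂ)) (g := (h : R4 → ℂ)) Real.continuous_fourierChar
        (continuous_inner.neg) φ.integrable hi
      have hflip : (-innerₗ R4).flip = -innerₗ R4 := by
        ext x y; simp [real_inner_comm]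
      rw [hflip] at h2
      have h3 : ∀ x, (𝓕⁻ φ) x = VectorFourier.fourierIntegral 𝐞 volume (-innerₗ R4) φ x := by
        intro x; rw [SchwartzMap.fourierInv_coe]; rfl
      simp_rw [h3] at h1
      simp only [smul_eq_mul] at h2
      rw [h2] at h1
      simpa [hφ] using! h1.symm
  filter_upwards [key] with x hx
  rw [hx]
  exact VectorFourier.norm_fourierIntegral_le_integral_norm _ _ _ _ _

end FourierSide

/-! ### The weight `|2πξ|⁴ + σ`: low and high frequencies -/

section LowFrequency

/-- The Fourier symbol `|2πξ|⁴ + σ` of `Δ² + σ`. -/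
def symb (σ : ℝ) (r : ℝ) : ℝ := (2 * π) ^ 4 * r ^ 4 + σ

lemma symb_pos {σ : ℝ} (hσ : 0 < σ) (r : ℝ) : 0 < symb σ r := by unfold symb; positivity

lemma continuous_symb (σ : ℝ) : Continuous (symb σ) := by unfold symb; fun_prop

lemma volume_unit_ball : (volume : Measure R4).real (Metric.ball 0 1) = π ^ 2 / 2 := by
  rw [Measure.real, EuclideanSpace.volume_ball]
  have h3 : Gamma (3 : ℝ) = 2 := by
    have := Real.Gamma_nat_eq_factorial 2
    norm_num [Nat.factorial] at this ⊢
  have h4 : √π ^ 4 = π ^ 2 := by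
    rw [show √π ^ 4 = (√π ^ 2) ^ 2 by ring, Real.sq_sqrt pi_pos.le]
  norm_num [h3, h4]
  positivity

/-- This is where the sharp constant `32π²` comes from: in polar coordinates the integral is
`2π² ∫₀^ρ r³ / ((2π)⁴ r⁴ + σ) dr`, and the integrand is a logarithmic derivative. -/
lemma integral_symb {σ ρ : ℝ} (hσ : 0 < σ) (hρ : 0 < ρ) :
    ∫ ξ in Metric.ball (0 : R4) ρ, (symb σ ‖ξ‖)⁻¹ =
      Real.log (symb σ ρ / σ) / (32 * π ^ 2) := by
  have e1 : ∫ ξ in Metric.ball (0 : R4) ρ, (symb σ ‖ξ‖)⁻¹ =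
      ∫ ξ : R4, (Set.Iio ρ).indicator (fun r => (symb σ r)⁻¹) ‖ξ‖ := by
    rw [← integral_indicator measurableSet_ball]
    congr 1; ext ξ
    simp [Set.indicator]
  have e2 : ∫ y in Set.Ioi (0 : ℝ), y ^ 3 • (Set.Iio ρ).indicator (fun r => (symb σ r)⁻¹) y =
      ∫ y in (0 : ℝ)..ρ, y ^ 3 * (symb σ y)⁻¹ := by
    rw [intervalIntegral.integral_of_le hρ.le, integral_Ioc_eq_integral_Ioo,
      ← integral_indicator measurableSet_Ioi, ← integral_indicator measurableSet_Ioo]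
    congr 1; ext y
    by_cases h1 : 0 < y <;> by_cases h2 : y < ρ <;> simp [Set.indicator, h1, h2]
  have e3 : ∫ y in (0 : ℝ)..ρ, y ^ 3 * (symb σ y)⁻¹ =
      Real.log (symb σ ρ) / (4 * (2 * π) ^ 4) - Real.log (symb σ 0) / (4 * (2 * π) ^ 4) := by
    apply intervalIntegral.integral_eq_sub_of_hasDerivAt
    · intro y _
      have hd : HasDerivAt (symb σ) ((2 * π) ^ 4 * (4 * y ^ 3)) y := by
        change HasDerivAt (fun r => (2 * π) ^ 4 * r ^ 4 + σ) _ y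
        exact (((hasDerivAt_pow 4 y).const_mul ((2 * π) ^ 4)).add_const σ).congr_deriv
          (by norm_num)
      have := (hd.log (symb_pos hσ y).ne').div_const (4 * (2 * π) ^ 4)
      refine this.congr_deriv ?_
      have := (symb_pos hσ y).ne'
      field_simp
    · apply Continuous.intervalIntegrable
      exact (continuous_pow 3).mul ((continuous_symb σ).inv₀ fun y => (symb_pos hσ y).ne')
  rw [e1, integral_fun_norm_addHaar, volume_unit_ball]
  simp only [finrank_euclideanSpace, Fintype.card_fin, Nat.add_one_sub_one]
  rw [e2, e3, Real.log_div (symb_pos hσ ρ).ne' hσ.ne', show symb σ 0 = σ by simp [symb]]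
  simp only [nsmul_eq_mul, smul_eq_mul]
  field_simp
  push_cast
  ring

/-- A function `h` with `∫ symb σ |ξ| |h|² ≤ 1` has small `L¹` norm on the ball of radius `ρ`: this
is Cauchy–Schwarz against the weight `symb σ`, in the form of Young's inequality with the optimal
parameter. -/
lemma low_freq {σ ρ : ℝ} (hσ : 0 < σ) (hρ : 0 < ρ) {h : R4 → ℂ} (hh : AEStronglyMeasurable h)
    (hE : ∫⁻ ξ : R4, ENNReal.ofReal (symb σ ‖ξ‖ * ‖h ξ‖ ^ 2) ≤ 1) :
    IntegrableOn h (Metric.ball 0 ρ) ∧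
      ∫ ξ in Metric.ball (0 : R4) ρ, ‖h ξ‖ ≤ √(Real.log (symb σ ρ / σ) / (32 * π ^ 2)) := by
  set B := Metric.ball (0 : R4) ρ
  set A := √(Real.log (symb σ ρ / σ) / (32 * π ^ 2)) with hA
  have hlog : 0 < Real.log (symb σ ρ / σ) := by
    apply Real.log_pos
    rw [lt_div_iff₀ hσ, symb]
    have : 0 < (2 * π) ^ 4 * ρ ^ 4 := by positivity
    linarith
  have hA0 : 0 < A := by positivity
  have hcs : Continuous fun ξ : R4 => symb σ ‖ξ‖ := (continuous_symb σ).comp continuous_norm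
  have hnn (ξ : R4) : 0 ≤ symb σ ‖ξ‖ * ‖h ξ‖ ^ 2 := mul_nonneg (symb_pos hσ _).le (sq_nonneg _)
  have hms : AEStronglyMeasurable fun ξ : R4 => symb σ ‖ξ‖ * ‖h ξ‖ ^ 2 :=
    hcs.aestronglyMeasurable.mul (hh.norm.pow 2)
  have i2 : Integrable fun ξ : R4 => symb σ ‖ξ‖ * ‖h ξ‖ ^ 2 :=
    ⟨hms, by
      rw [hasFiniteIntegral_iff_ofReal (.of_forall hnn)]
      exact hE.trans_lt one_lt_top⟩
  have b2 : ∫ ξ in B, symb σ ‖ξ‖ * ‖h ξ‖ ^ 2 ≤ 1 := by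
    refine (setIntegral_le_integral i2 (.of_forall hnn)).trans ?_
    rw [integral_eq_lintegral_of_nonneg_ae (.of_forall hnn) hms]
    exact ENNReal.toReal_mono one_ne_top hE
  have i1 : IntegrableOn (fun ξ : R4 => (symb σ ‖ξ‖)⁻¹) B := by
    refine ((hcs.inv₀ fun ξ => (symb_pos hσ _).ne').continuousOn.integrableOn_compact
      (isCompact_closedBall (0 : R4) ρ)).mono_set Metric.ball_subset_closedBall
  have b1 : ∫ ξ in B, (symb σ ‖ξ‖)⁻¹ = A ^ 2 := by
    rw [integral_symb hσ hρ, hA, Real.sq_sqrt (by positivity)]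
  have hpt (ξ : R4) : ‖h ξ‖ ≤ (A⁻¹ / 2) * (symb σ ‖ξ‖)⁻¹ + (A / 2) * (symb σ ‖ξ‖ * ‖h ξ‖ ^ 2) := by
    have hs := symb_pos hσ ‖ξ‖
    have := sq_nonneg (1 - A * symb σ ‖ξ‖ * ‖h ξ‖)
    have h2 : (A⁻¹ / 2) * (symb σ ‖ξ‖)⁻¹ + (A / 2) * (symb σ ‖ξ‖ * ‖h ξ‖ ^ 2) - ‖h ξ‖ =
        (1 - A * symb σ ‖ξ‖ * ‖h ξ‖) ^ 2 / (2 * A * symb σ ‖ξ‖) := by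
      field_simp
      ring
    have h3 : 0 ≤ (1 - A * symb σ ‖ξ‖ * ‖h ξ‖) ^ 2 / (2 * A * symb σ ‖ξ‖) := by positivity
    linarith
  have isum : IntegrableOn (fun ξ : R4 =>
      (A⁻¹ / 2) * (symb σ ‖ξ‖)⁻¹ + (A / 2) * (symb σ ‖ξ‖ * ‖h ξ‖ ^ 2)) B :=
    (i1.const_mul _).add (i2.integrableOn.const_mul _)
  have ih : IntegrableOn h B := isum.mono' hh.restrict (.of_forall hpt)
  refine ⟨ih, (integral_mono ih.norm isum hpt).trans ?_⟩
  rw [integral_add (i1.const_mul _) (i2.integrableOn.const_mul _), integral_const_mul,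
    integral_const_mul, b1]
  have : (A / 2) * ∫ ξ in B, symb σ ‖ξ‖ * ‖h ξ‖ ^ 2 ≤ A / 2 * 1 := by gcongr
  have h4 : A⁻¹ / 2 * A ^ 2 = A / 2 := by field_simp
  linarith

/-- Outside the ball of radius `ρ` the weight is at least `symb σ ρ`, which bounds the `L²` norm. -/
lemma high_freq {σ ρ : ℝ} (hσ : 0 < σ) (hρ : 0 < ρ) {h : R4 → ℂ}
    (hE : ∫⁻ ξ : R4, ENNReal.ofReal (symb σ ‖ξ‖ * ‖h ξ‖ ^ 2) ≤ 1) :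
    ∫⁻ ξ in (Metric.ball (0 : R4) ρ)ᶜ, ‖h ξ‖ₑ ^ 2 ≤ ENNReal.ofReal (symb σ ρ)⁻¹ := by
  calc _ ≤ ∫⁻ ξ in (Metric.ball (0 : R4) ρ)ᶜ, ENNReal.ofReal (symb σ ρ)⁻¹ *
        ENNReal.ofReal (symb σ ‖ξ‖ * ‖h ξ‖ ^ 2) := by
        apply setLIntegral_mono' measurableSet_ball.compl
        intro ξ hξ
        have hξ' : ρ ≤ ‖ξ‖ := by simpa using hξ
        have hs := symb_pos hσ ρ
        rw [← ENNReal.ofReal_mul (by positivity), ← ofReal_norm, ← ENNReal.ofReal_pow (by positivity)]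
        apply ENNReal.ofReal_le_ofReal
        have : symb σ ρ ≤ symb σ ‖ξ‖ := by unfold symb; gcongr
        calc ‖h ξ‖ ^ 2 = (symb σ ρ)⁻¹ * (symb σ ρ * ‖h ξ‖ ^ 2) := by field_simp
          _ ≤ _ := by gcongr
    _ ≤ ∫⁻ ξ : R4, ENNReal.ofReal (symb σ ρ)⁻¹ * ENNReal.ofReal (symb σ ‖ξ‖ * ‖h ξ‖ ^ 2) :=
        setLIntegral_le_lintegral _ _
    _ ≤ _ := by
        rw [lintegral_const_mul' _ _ ofReal_ne_top]
        exact mul_le_of_le_one_right' hE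

end LowFrequency

/-! ### From Gaussian tails to exponential moments, and the singular weight -/

section ExponentialSums

lemma exp_sub_one_nonneg {a : ℝ} (ha : 0 ≤ a) (y : ℝ) : 0 ≤ Real.exp (a * y ^ 2) - 1 := by
  have : 0 ≤ a * y ^ 2 := by positivity
  linarith [Real.add_one_le_exp (a * y ^ 2)]

lemma summable_gauss {a b : ℝ} (h : a < b) :
    Summable fun k : ℕ => Real.exp (a * (k + 3) ^ 2) * Real.exp (-b * (k + 1) ^ 2) := by
  -- the exponent is a quadratic polynomial in `k` with leading coefficient `a - b < 0`
  set d := b - a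
  have hd : 0 < d := by simp only [d]; linarith
  set e := 6 * a - 2 * b
  set K := 9 * a - b + (e + 1) ^ 2 / (4 * d)
  refine Summable.of_nonneg_of_le (fun k => by positivity) (fun k => ?_)
    (Real.summable_exp_neg_nat.mul_left (Real.exp K))
  rw [← Real.exp_add, ← Real.exp_add]
  apply Real.exp_le_exp.2
  have h1 : (e + 1) * k ≤ d * (k : ℝ) ^ 2 + (e + 1) ^ 2 / (4 * d) := by
    have h2 : d * (k : ℝ) ^ 2 + (e + 1) ^ 2 / (4 * d) - (e + 1) * k
        = (2 * d * k - (e + 1)) ^ 2 / (4 * d) := by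
      field_simp
      ring
    have h3 : 0 ≤ (2 * d * k - (e + 1)) ^ 2 / (4 * d) := by positivity
    linarith
  simp only [K, e, d] at *
  nlinarith

/-- For `|y| ≤ 2` the function `exp (a y²) - 1` is controlled by `y²`; for larger `|y|` a single
level set `{|y| > k + 2}`, with `k = ⌈|y|⌉ - 3`, suffices. -/
lemma exp_pointwise {a : ℝ} (ha : 0 ≤ a) (y : ℝ) :
    ENNReal.ofReal (Real.exp (a * y ^ 2) - 1) ≤
      ENNReal.ofReal (a * Real.exp (4 * a)) * ENNReal.ofReal (y ^ 2) +
      ∑' k : ℕ, {z : ℝ | (k : ℝ) + 2 < |z|}.indicator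
        (fun _ => ENNReal.ofReal (Real.exp (a * (k + 3) ^ 2))) y := by
  by_cases hy : |y| ≤ 2
  · refine le_add_right ?_
    rw [← ENNReal.ofReal_mul (by positivity)]
    apply ENNReal.ofReal_le_ofReal
    have hy2 : y ^ 2 ≤ 4 := by
      rw [← sq_abs]; nlinarith [abs_nonneg y]
    have h1 : 1 - a * y ^ 2 ≤ Real.exp (-(a * y ^ 2)) := by
      linarith [Real.add_one_le_exp (-(a * y ^ 2))]
    have h2 : Real.exp (a * y ^ 2) * (1 - a * y ^ 2) ≤ 1 := by
      calc _ ≤ Real.exp (a * y ^ 2) * Real.exp (-(a * y ^ 2)) := by gcongr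
        _ = 1 := by rw [← Real.exp_add]; simp
    have h3 : Real.exp (a * y ^ 2) ≤ Real.exp (4 * a) := Real.exp_le_exp.2 (by nlinarith)
    have h4 : a * y ^ 2 * Real.exp (a * y ^ 2) ≤ a * y ^ 2 * Real.exp (4 * a) := by gcongr
    linarith
  · push Not at hy
    refine le_add_left ?_
    obtain ⟨n, hn⟩ : ∃ n : ℕ, n = ⌈|y|⌉₊ := ⟨_, rfl⟩
    have h1 : |y| ≤ n := hn ▸ Nat.le_ceil _
    have h2 : (n : ℝ) < |y| + 1 := hn ▸ Nat.ceil_lt_add_one (abs_nonneg y)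
    have h3 : 3 ≤ n := by
      have : (2 : ℝ) < n := hy.trans_le h1
      exact_mod_cast this
    obtain ⟨k, rfl⟩ := Nat.exists_eq_add_of_le' h3
    push_cast at h1 h2
    refine le_trans ?_ (ENNReal.le_tsum k)
    rw [Set.indicator_of_mem (by simp only [Set.mem_ofPred_eq]; linarith)]
    apply ENNReal.ofReal_le_ofReal
    have : Real.exp (a * y ^ 2) ≤ Real.exp (a * (k + 3) ^ 2) := by
      apply Real.exp_le_exp.2
      rw [← sq_abs y]
      gcongr
    linarith

/-- A function with a Gaussian tail of rate `b` has an exponential moment of every rate `a < b`;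
the bound depends only on the constants. -/
lemma exp_moment {a b σ : ℝ} (ha : 0 ≤ a) (hab : a < b) (hσ : 0 < σ) :
    ∃ C : ℝ, 0 ≤ C ∧ ∀ u : R4 → ℝ, Measurable u →
      ∫⁻ x, ENNReal.ofReal (u x ^ 2) ≤ ENNReal.ofReal σ⁻¹ →
      (∀ t : ℝ, 0 < t → volume {x | t + 1 < |u x|} ≤ ENNReal.ofReal (σ⁻¹ * Real.exp (-b * t ^ 2))) →
      ∫⁻ x, ENNReal.ofReal (Real.exp (a * u x ^ 2) - 1) ≤ ENNReal.ofReal C := by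
  have hs := (summable_gauss hab).mul_left σ⁻¹
  refine ⟨a * Real.exp (4 * a) * σ⁻¹ +
    ∑' k : ℕ, σ⁻¹ * (Real.exp (a * (k + 3) ^ 2) * Real.exp (-b * (k + 1) ^ 2)),
    add_nonneg (by positivity) (tsum_nonneg fun k => by positivity), fun u hu h2 ht => ?_⟩
  refine (lintegral_mono fun x => exp_pointwise ha (u x)).trans ?_
  have hm (k : ℕ) : MeasurableSet {z : ℝ | (k : ℝ) + 2 < |z|} :=
    measurableSet_lt measurable_const measurable_norm
  have hm' (k : ℕ) : AEMeasurable (fun x : R4 => {z : ℝ | (k : ℝ) + 2 < |z|}.indicator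
      (fun _ => ENNReal.ofReal (Real.exp (a * (k + 3) ^ 2))) (u x)) :=
    ((measurable_const.indicator (hm k)).comp hu).aemeasurable
  rw [lintegral_add_left (by fun_prop), lintegral_const_mul _ (by fun_prop),
    lintegral_tsum hm',
    ENNReal.ofReal_add (by positivity) (tsum_nonneg fun k => by positivity)]
  gcongr
  · rw [ENNReal.ofReal_mul (p := a * Real.exp (4 * a)) (by positivity)]
    gcongr
  · rw [ENNReal.ofReal_tsum_of_nonneg (fun k => by positivity) hs]
    refine ENNReal.tsum_le_tsum fun k => ?_
    calc _ = ∫⁻ x, {x | ((k : ℝ) + 1) + 1 < |u x|}.indicator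
          (fun _ => ENNReal.ofReal (Real.exp (a * (k + 3) ^ 2))) x := by
          congr 1; ext x
          simp only [Set.indicator, Set.mem_ofPred_eq, add_assoc]
          norm_num
      _ = ENNReal.ofReal (Real.exp (a * (k + 3) ^ 2)) * volume {x | ((k : ℝ) + 1) + 1 < |u x|} := by
          rw [lintegral_indicator_const]
          exact measurableSet_lt measurable_const hu.abs
      _ ≤ ENNReal.ofReal (Real.exp (a * (k + 3) ^ 2)) *
          ENNReal.ofReal (σ⁻¹ * Real.exp (-b * ((k : ℝ) + 1) ^ 2)) := by
          gcongr
          exact ht _ (by positivity)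
      _ = _ := by
          rw [← ENNReal.ofReal_mul (by positivity)]
          ring_nf

end ExponentialSums

section SingularWeight

lemma lintegral_weight {s : ℝ} (hs : s < 4) :
    ∫⁻ x in Metric.ball (0 : R4) 1, ENNReal.ofReal (‖x‖ ^ (-s) + 1) ≠ ∞ := by
  have : IntegrableOn (fun x : R4 => ‖x‖ ^ (-s) + 1) (Metric.ball 0 1) := by
    refine IntegrableOn.add ?_ (integrableOn_const measure_ball_lt_top.ne)
    have := (integrable_fun_norm_addHaar (volume : Measure R4)
      (f := (Set.Iio 1).indicator fun r : ℝ => r ^ (-s))).2 ?_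
    · rw [← integrable_indicator_iff measurableSet_ball]
      refine this.congr (.of_forall fun x => ?_)
      simp [Set.indicator]
    · simp only [finrank_euclideanSpace, Fintype.card_fin, Nat.add_one_sub_one]
      have h1 : IntegrableOn (fun y : ℝ => y ^ (3 - s)) (Set.Ioo 0 1) :=
        (intervalIntegral.integrableOn_Ioo_rpow_iff one_pos).2 (by linarith)
      rw [← integrable_indicator_iff measurableSet_Ioo] at h1
      rw [← integrable_indicator_iff measurableSet_Ioi]
      refine h1.congr (.of_forall fun y => ?_)
      by_cases h0 : 0 < y <;> by_cases h2 : y < 1 <;> simp [Set.indicator, h0, h2]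
      rw [sub_eq_add_neg, Real.rpow_add h0]
      norm_cast
  rw [← lt_top_iff_ne_top, ← hasFiniteIntegral_iff_ofReal (.of_forall fun x => by positivity)]
  exact this.2

/-- Young's inequality trades the singular weight for a larger exponent. -/
lemma weight_pointwise {α β p q : ℝ} (hα : 0 ≤ α) (hβ : 0 ≤ β) (hpq : p.HolderConjugate q)
    {x : R4} (hx : x ≠ 0) (y : ℝ) :
    ENNReal.ofReal ((Real.exp (α * y ^ 2) - 1) / ‖x‖ ^ β) ≤
      ENNReal.ofReal (Real.exp (α * p * y ^ 2) - 1) +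
      (Metric.ball (0 : R4) 1).indicator (fun x => ENNReal.ofReal (‖x‖ ^ (-(β * q)) + 1)) x := by
  have hp := hpq.lt
  have hx0 : 0 < ‖x‖ := norm_pos_iff.2 hx
  have hmono : Real.exp (α * y ^ 2) ≤ Real.exp (α * p * y ^ 2) := by
    apply Real.exp_le_exp.2
    gcongr
    nlinarith
  have h0 := exp_sub_one_nonneg hα y
  by_cases h1 : ‖x‖ < 1
  · rw [Set.indicator_of_mem (by simpa using h1),
      ← ENNReal.ofReal_add (by linarith) (by positivity)]
    apply ENNReal.ofReal_le_ofReal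
    have hY := Real.young_inequality_of_nonneg (Real.exp_pos (α * y ^ 2)).le
      (Real.rpow_nonneg hx0.le (-β)) hpq
    rw [← Real.exp_mul, ← Real.rpow_mul hx0.le] at hY
    have e1 : α * y ^ 2 * p = α * p * y ^ 2 := by ring
    have e2 : -β * q = -(β * q) := by ring
    rw [e1, e2] at hY
    have h3 : Real.exp (α * p * y ^ 2) / p ≤ Real.exp (α * p * y ^ 2) :=
      div_le_self (by positivity) hp.le
    have h4 : ‖x‖ ^ (-(β * q)) / q ≤ ‖x‖ ^ (-(β * q)) :=
      div_le_self (by positivity) hpq.symm.lt.le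
    have h5 : (Real.exp (α * y ^ 2) - 1) / ‖x‖ ^ β ≤ Real.exp (α * y ^ 2) * ‖x‖ ^ (-β) := by
      rw [Real.rpow_neg hx0.le, ← div_eq_mul_inv]
      gcongr
      linarith
    linarith
  · rw [Set.indicator_of_notMem (by simpa using h1), add_zero]
    apply ENNReal.ofReal_le_ofReal
    have : 1 ≤ ‖x‖ ^ β := Real.one_le_rpow (not_lt.1 h1) hβ
    exact (div_le_self h0 this).trans (by linarith)

end SingularWeight

/-! ### Energy on the Fourier side and the Gaussian tail of `u` -/

section Energy
open FourierTransform SchwartzMap Laplacian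
open scoped ContDiff

lemma Lp.enorm_sq (f : Lp ℂ 2 (volume : Measure R4)) : ‖f‖ₑ ^ 2 = ∫⁻ x, ‖f x‖ₑ ^ 2 := by
  rw [Lp.enorm_def]
  have := eLpNorm_nnreal_pow_eq_lintegral (f := f) (μ := (volume : Measure R4)) (p := 2) (by norm_num)
  norm_cast at this
  simpa using this

lemma memLp_two_of {f : R4 → ℝ} (hf : Continuous f) {E : R4 → ℝ} {c : ℝ} (hc : 0 < c)
    (hle : ∀ x, c * f x ^ 2 ≤ E x) (hE : ∫⁻ x, ENNReal.ofReal (E x) ≤ 1) :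
    MemLp f 2 (volume : Measure R4) := by
  rw [memLp_two_iff_integrable_sq hf.aestronglyMeasurable]
  refine ⟨(hf.pow 2).aestronglyMeasurable, ?_⟩
  rw [hasFiniteIntegral_iff_ofReal (.of_forall fun x => sq_nonneg _)]
  calc ∫⁻ x, ENNReal.ofReal (f x ^ 2)
      ≤ ∫⁻ x, ENNReal.ofReal c⁻¹ * ENNReal.ofReal (E x) := by
        refine lintegral_mono fun x => ?_
        rw [← ENNReal.ofReal_mul (by positivity)]
        apply ENNReal.ofReal_le_ofReal
        rw [inv_mul_eq_div, le_div_iff₀ hc]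
        linarith [hle x]
    _ = ENNReal.ofReal c⁻¹ * ∫⁻ x, ENNReal.ofReal (E x) := lintegral_const_mul' _ _ ofReal_ne_top
    _ ≤ ENNReal.ofReal c⁻¹ * 1 := by gcongr
    _ < ⊤ := by simp

/-- The energy bound on the Fourier side, via Plancherel for `u` and for `Δu`. -/
lemma energy_fourier {σ τ : ℝ} (hσ : 0 < σ) (hτ : 0 < τ) {u : R4 → ℝ} (hu : ContDiff ℝ ∞ u)
    (hE : ∫⁻ x : R4,
      ENNReal.ofReal (lapl u x ^ 2 + τ * ‖gradient u x‖ ^ 2 + σ * u x ^ 2) ≤ 1) :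
    ∃ U : Lp ℂ 2 (volume : Measure R4), (∀ᵐ x, U x = (u x : ℂ)) ∧
      ∫⁻ ξ : R4, ENNReal.ofReal (symb σ ‖ξ‖ *
        ‖(𝓕 U : Lp ℂ 2 (volume : Measure R4)) ξ‖ ^ 2) ≤ 1 := by
  have h0 : MemLp u 2 := memLp_two_of hu.continuous hσ
    (fun x => by have := sq_nonneg (lapl u x); have : 0 ≤ τ * ‖gradient u x‖ ^ 2 := by positivity
                 linarith) hE
  have h1 (i : Fin 4) : MemLp (pd i u) 2 := memLp_two_of (contDiff_pd hu i).continuous hτ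
    (fun x => by
      have h2 : pd i u x ^ 2 ≤ ‖gradient u x‖ ^ 2 := by
        rw [← sq_abs]
        have := abs_pd_le (i := i) (u := u) (x := x)
        gcongr
      have h3 : 0 ≤ lapl u x ^ 2 := sq_nonneg _
      have h4 : 0 ≤ σ * u x ^ 2 := by positivity
      have h5 : τ * pd i u x ^ 2 ≤ τ * ‖gradient u x‖ ^ 2 := by gcongr
      linarith) hE
  have h2 : MemLp (lapl u) 2 := memLp_two_of (continuous_lapl hu) one_pos
    (fun x => by
      have : 0 ≤ τ * ‖gradient u x‖ ^ 2 := by positivity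
      have : 0 ≤ σ * u x ^ 2 := by positivity
      linarith) hE
  set U := (h0.ofReal (K := ℂ)).toLp _ with hU
  set L := (h2.ofReal (K := ℂ)).toLp _ with hL
  have hU' : ∀ᵐ x, U x = (u x : ℂ) := MemLp.coeFn_toLp _
  have hL' : ∀ᵐ x, L x = (lapl u x : ℂ) := MemLp.coeFn_toLp _
  have hF := fourier_laplacian_ae U L (laplacian_distribution hu h0 h1 h2)
  refine ⟨U, hU', ?_⟩
  have hm : AEMeasurable fun ξ : R4 => ‖(𝓕 L : Lp ℂ 2 (volume : Measure R4)) ξ‖ₑ ^ 2 :=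
    (Lp.aestronglyMeasurable _).enorm.pow_const _
  have hm' : AEMeasurable fun x : R4 => ‖L x‖ₑ ^ 2 :=
    (Lp.aestronglyMeasurable _).enorm.pow_const _
  have hPU : ‖(𝓕 U : Lp ℂ 2 (volume : Measure R4))‖ₑ = ‖U‖ₑ := by
    rw [← ofReal_norm, ← ofReal_norm, Lp.norm_fourier_eq]
  have hPL : ‖(𝓕 L : Lp ℂ 2 (volume : Measure R4))‖ₑ = ‖L‖ₑ := by
    rw [← ofReal_norm, ← ofReal_norm, Lp.norm_fourier_eq]
  calc _ = ∫⁻ ξ : R4, (‖(𝓕 L : Lp ℂ 2 (volume : Measure R4)) ξ‖ₑ ^ 2 +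
        ENNReal.ofReal σ * ‖(𝓕 U : Lp ℂ 2 (volume : Measure R4)) ξ‖ₑ ^ 2) := by
        refine lintegral_congr_ae (hF.mono fun ξ h => ?_)
        simp only
        rw [h]
        set z := (𝓕 U : Lp ℂ 2 (volume : Measure R4)) ξ
        rw [← ofReal_norm, ← ofReal_norm, ← ENNReal.ofReal_pow (by positivity),
          ← ENNReal.ofReal_pow (by positivity), ← ENNReal.ofReal_mul hσ.le,
          ← ENNReal.ofReal_add (by positivity) (by positivity), norm_mul, norm_neg,
          Complex.norm_real, Real.norm_of_nonneg (by positivity)]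
        congr 1
        unfold symb
        ring
    _ = ∫⁻ x : R4, (‖L x‖ₑ ^ 2 + ENNReal.ofReal σ * ‖U x‖ₑ ^ 2) := by
        rw [lintegral_add_left' hm, lintegral_add_left' hm', lintegral_const_mul' _ _ ofReal_ne_top,
          lintegral_const_mul' _ _ ofReal_ne_top, ← Lp.enorm_sq, ← Lp.enorm_sq, ← Lp.enorm_sq,
          ← Lp.enorm_sq, hPU, hPL]
    _ ≤ ∫⁻ x : R4,
      ENNReal.ofReal (lapl u x ^ 2 + τ * ‖gradient u x‖ ^ 2 + σ * u x ^ 2) := by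
        refine lintegral_mono_ae ?_
        filter_upwards [hU', hL'] with x hx hy
        rw [hx, hy, ← ofReal_norm, ← ofReal_norm, ← ENNReal.ofReal_pow (by positivity),
          ← ENNReal.ofReal_pow (by positivity), ← ENNReal.ofReal_mul hσ.le,
          ← ENNReal.ofReal_add (by positivity) (by positivity), Complex.norm_real,
          Complex.norm_real, Real.norm_eq_abs, Real.norm_eq_abs, sq_abs, sq_abs]
        apply ENNReal.ofReal_le_ofReal
        have : 0 ≤ τ * ‖gradient u x‖ ^ 2 := by positivity
        linarith
    _ ≤ 1 := hE

/-- The low frequencies of `u` are bounded pointwise by `t` and the high ones are small in `L²`,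
so `|u| > t + 1` forces the high-frequency part to exceed `1`. -/
lemma tail_bound {σ t : ℝ} (hσ : 0 < σ) (ht : 0 < t) (U : Lp ℂ 2 (volume : Measure R4))
    (hE : ∫⁻ ξ : R4, ENNReal.ofReal (symb σ ‖ξ‖ *
      ‖(𝓕 U : Lp ℂ 2 (volume : Measure R4)) ξ‖ ^ 2) ≤ 1) :
    volume {x | t + 1 < ‖U x‖} ≤ ENNReal.ofReal (σ⁻¹ * Real.exp (-(32 * π ^ 2) * t ^ 2)) := by
  -- the cut-off frequency is chosen so that `symb σ ρ = σ exp (32 π² t²)`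
  set M := Real.exp (32 * π ^ 2 * t ^ 2) with hM
  have hM1 : 1 < M := Real.one_lt_exp_iff.2 (by positivity)
  obtain ⟨ρ, hρ, hsρ⟩ : ∃ ρ : ℝ, 0 < ρ ∧ symb σ ρ = σ * M := by
    have hy : 0 < σ * (M - 1) / (2 * π) ^ 4 :=
      div_pos (mul_pos hσ (by linarith)) (by positivity)
    refine ⟨(σ * (M - 1) / (2 * π) ^ 4) ^ ((4 : ℕ) : ℝ)⁻¹, by positivity, ?_⟩
    rw [symb, Real.rpow_inv_natCast_pow hy.le (by norm_num)]
    field_simp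
    ring
  set h : Lp ℂ 2 (volume : Measure R4) := 𝓕 U with hh
  set B := Metric.ball (0 : R4) ρ
  have hB : MeasurableSet B := measurableSet_ball
  have hmem := Lp.memLp h
  set h1 := (hmem.indicator hB).toLp _ with hh1
  set h2 := (hmem.indicator hB.compl).toLp _ with hh2
  have c1 : ∀ᵐ ξ, h1 ξ = B.indicator h ξ := MemLp.coeFn_toLp _
  have c2 : ∀ᵐ ξ, h2 ξ = Bᶜ.indicator h ξ := MemLp.coeFn_toLp _
  have hsum : h = h1 + h2 := by
    apply Lp.ext
    filter_upwards [c1, c2, Lp.coeFn_add h1 h2] with ξ e1 e2 e3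
    rw [e3, Pi.add_apply, e1, e2, Set.indicator_self_add_compl_apply]
  have hU : U = 𝓕⁻ h1 + 𝓕⁻ h2 := by
    rw [← FourierTransform.fourierInv_add, ← hsum, hh, FourierTransform.fourierInv_fourier_eq]
  obtain ⟨ih, hlow⟩ := low_freq hσ hρ (Lp.aestronglyMeasurable h) hE
  have hhigh := high_freq hσ hρ hE
  have hlow' : ∀ᵐ x, ‖(𝓕⁻ h1 : Lp ℂ 2 (volume : Measure R4)) x‖ ≤ t := by
    have hi : Integrable (h1 : R4 → ℂ) := (ih.integrable_indicator hB).congr (c1.mono fun _ e => e.symm)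
    filter_upwards [norm_fourierInv_le h1 hi] with x hx
    refine hx.trans ?_
    calc ∫ y, ‖h1 y‖ = ∫ y in B, ‖h y‖ := by
          rw [← integral_indicator hB]
          refine integral_congr_ae (c1.mono fun y e => ?_)
          simp only
          rw [e, norm_indicator_eq_indicator_norm]
      _ ≤ _ := hlow
      _ = t := by
          rw [hsρ, mul_div_cancel_left₀ _ hσ.ne', hM, Real.log_exp,
            mul_div_cancel_left₀ _ (by positivity), Real.sqrt_sq ht.le]
  set v := (𝓕⁻ h2 : Lp ℂ 2 (volume : Measure R4)) with hv
  have hv2 : ∫⁻ x, ‖v x‖ₑ ^ 2 ≤ ENNReal.ofReal (symb σ ρ)⁻¹ := by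
    have : ‖v‖ₑ = ‖h2‖ₑ := by
      rw [← ofReal_norm, ← ofReal_norm, hv, ← Lp.norm_fourier_eq,
        FourierTransform.fourier_fourierInv_eq]
    rw [← Lp.enorm_sq, this, Lp.enorm_sq]
    refine le_trans (le_of_eq ?_) hhigh
    rw [← lintegral_indicator hB.compl]
    refine lintegral_congr_ae (c2.mono fun ξ e => ?_)
    simp only
    rw [e]
    by_cases hξ : ξ ∈ Bᶜ
    · rw [Set.indicator_of_mem hξ, Set.indicator_of_mem hξ]
    · rw [Set.indicator_of_notMem hξ, Set.indicator_of_notMem hξ]; simp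
  calc volume {x | t + 1 < ‖U x‖} ≤ volume {x | 1 ≤ ‖v x‖ₑ ^ 2} := by
        apply measure_mono_ae
        filter_upwards [hlow', Lp.coeFn_add (𝓕⁻ h1 : Lp ℂ 2 (volume : Measure R4)) v] with x a b hx
        have hx : t + 1 < ‖U x‖ := hx
        change 1 ≤ ‖v x‖ₑ ^ 2
        rw [hU, b, Pi.add_apply] at hx
        have := norm_add_le ((𝓕⁻ h1 : Lp ℂ 2 (volume : Measure R4)) x) (v x)
        apply one_le_pow₀
        rw [← ofReal_norm, ENNReal.one_le_ofReal]
        linarith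
    _ ≤ ∫⁻ x, ‖v x‖ₑ ^ 2 := by
        have := mul_meas_ge_le_lintegral₀ (μ := (volume : Measure R4))
          ((Lp.aestronglyMeasurable v).enorm.pow_const 2) 1
        simpa using this
    _ ≤ _ := hv2
    _ = _ := by
        rw [hsρ, hM, mul_inv, ← Real.exp_neg]
        ring_nf

end Energy

/-! ### The inequality -/

/-- Theorem 1.1 (subcritical singular Adams-type inequality): for `0 ≤ β < 4`, `τ, σ > 0`
and `0 < α < 32π²(1 − β/4)` there is `C > 0` such that every smooth `u` with
`∫(|Δu|² + τ|∇u|² + σu²) dx ≤ 1` satisfies `∫ (e^{αu²} − 1)/|x|^β dx ≤ C`. -/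
theorem stmt_4 (β τ σ α : ℝ) (hβ0 : 0 ≤ β) (hβ4 : β < 4) (hτ : 0 < τ) (hσ : 0 < σ)
    (hα0 : 0 < α) (hα : α < 32 * π ^ 2 * (1 - β / 4)) :
    ∃ C : ℝ, 0 < C ∧ ∀ u : R4 → ℝ, ContDiff ℝ (⊤ : ℕ∞) u →
      (∫⁻ x : R4,
        ENNReal.ofReal ((lapl u x) ^ 2 + τ * ‖gradient u x‖ ^ 2 + σ * (u x) ^ 2)) ≤ 1 →
      (∫⁻ x : R4, ENNReal.ofReal ((Real.exp (α * (u x) ^ 2) - 1) / ‖x‖ ^ β))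
        ≤ ENNReal.ofReal C := by
  -- pick `r = 1 / p` strictly between `α / (32 π²)` and `1 - β / 4`, and positive
  obtain ⟨r, hr1, hr2⟩ : ∃ r : ℝ, α / (32 * π ^ 2) < r ∧ r < 1 - β / 4 := by
    apply exists_between
    rw [div_lt_iff₀ (by positivity)]
    linarith
  have hr0 : 0 < r := lt_trans (by positivity) hr1
  have hr1' : r < 1 := by linarith
  set p := r⁻¹ with hp
  set q := (1 - r)⁻¹ with hq
  have hpq : p.HolderConjugate q := Real.HolderConjugate.inv_one_sub_inv hr0 hr1'
  have hap : α * p < 32 * π ^ 2 := by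
    rw [hp, ← div_eq_mul_inv, div_lt_iff₀ hr0]
    rw [div_lt_iff₀ (by positivity)] at hr1
    linarith
  have hbq : β * q < 4 := by
    rw [hq, ← div_eq_mul_inv, div_lt_iff₀ (by linarith)]
    linarith
  have hp0 : 0 < p := hpq.pos
  obtain ⟨C, hC0, hC⟩ := exp_moment (a := α * p) (by positivity) hap hσ
  set W := ∫⁻ x in Metric.ball (0 : R4) 1, ENNReal.ofReal (‖x‖ ^ (-(β * q)) + 1) with hW
  have hWt : W ≠ ∞ := lintegral_weight hbq
  refine ⟨C + W.toReal + 1, by positivity, fun u hu hE => ?_⟩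
  obtain ⟨U, hU, hUE⟩ := energy_fourier hσ hτ hu hE
  have hum : Measurable u := hu.continuous.measurable
  have hA := hC u hum ?_ ?_
  · calc _ ≤ ∫⁻ x : R4, (ENNReal.ofReal (Real.exp (α * p * u x ^ 2) - 1) +
          (Metric.ball (0 : R4) 1).indicator
            (fun x => ENNReal.ofReal (‖x‖ ^ (-(β * q)) + 1)) x) := by
          refine lintegral_mono_ae ?_
          filter_upwards [compl_mem_ae_iff.2 (measure_singleton (0 : R4))] with x hx
          exact weight_pointwise hα0.le hβ0 hpq hx (u x)
      _ = (∫⁻ x : R4, ENNReal.ofReal (Real.exp (α * p * u x ^ 2) - 1)) + W := by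
          rw [lintegral_add_left (by fun_prop), lintegral_indicator measurableSet_ball]
      _ ≤ ENNReal.ofReal C + ENNReal.ofReal W.toReal := by
          rw [ENNReal.ofReal_toReal hWt]
          gcongr
      _ ≤ _ := by
          rw [← ENNReal.ofReal_add hC0 ENNReal.toReal_nonneg]
          apply ENNReal.ofReal_le_ofReal
          linarith
  · calc ∫⁻ x, ENNReal.ofReal (u x ^ 2) ≤ ∫⁻ x, ENNReal.ofReal σ⁻¹ *
          ENNReal.ofReal ((lapl u x) ^ 2 + τ * ‖gradient u x‖ ^ 2 + σ * (u x) ^ 2) := by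
          refine lintegral_mono fun x => ?_
          rw [← ENNReal.ofReal_mul (by positivity)]
          apply ENNReal.ofReal_le_ofReal
          rw [inv_mul_eq_div, le_div_iff₀ hσ]
          have : 0 ≤ lapl u x ^ 2 := sq_nonneg _
          have : 0 ≤ τ * ‖gradient u x‖ ^ 2 := by positivity
          linarith
      _ ≤ _ := by
          rw [lintegral_const_mul' _ _ ofReal_ne_top]
          exact mul_le_of_le_one_right' hE
  · intro t ht
    refine le_trans (measure_mono_ae ?_) (tail_bound hσ ht U hUE)
    filter_upwards [hU] with x hx h
    change t + 1 < ‖U x‖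
    rw [hx, Complex.norm_real]
    exact h
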